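/- arXiv:2410.09878 — 6 statements merged into one kernel-verified Lean document; each statement's English description precedes it below -/
import Mathlib

section
/- Let n be a positive integer, let Z_1, ..., Z_{n+1} be exchangeable real-valued random variables on a probability space, and let α ∈ (0,1). Set k := ⌊α(n+1)⌋ and assume 1 ≤ k ≤ n. Let τ be the k-th smallest value among Z_1, ..., Z_n. Then P(Z_{n+1} ≥ τ) ≥ 1 − α. -/
open MeasureTheory

/-- The `k`-th smallest value (k-th order statistic) of the tuple `z`:
the `k`-th entry of its nondecreasing rearrangement. -/
noncomputable def kthSmallest {n : ℕ} (z : Fin n → ℝ) (k : ℕ) : ℝ :=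
  (List.insertionSort (· ≤ ·) (List.ofFn z)).getD (k - 1) 0

lemma kth_le_aux {n : ℕ} (z : Fin n → ℝ) (k : ℕ) (hk1 : 1 ≤ k) (hkn : k ≤ n) (x : ℝ)
    (h : k ≤ (Finset.univ.filter (fun i => z i ≤ x)).card) : kthSmallest z k ≤ x := by
  unfold kthSmallest
  set l := List.insertionSort (· ≤ ·) (List.ofFn z) with hl
  have hperm : l.Perm (List.ofFn z) := List.perm_insertionSort _ _
  have hlen : l.length = n := by rw [hperm.length_eq]; simp
  have hsort : l.Pairwise (· ≤ ·) := List.pairwise_insertionSort _ _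
  have hlt : k - 1 < l.length := by omega
  rw [List.getD_eq_getElem _ _ hlt]
  by_contra! hx
  have hcount : l.countP (fun y => decide (y ≤ x)) = (Finset.univ.filter (fun i => z i ≤ x)).card := by
    rw [hperm.countP_eq, List.ofFn_eq_map, List.countP_map]
    rw [Finset.card_def, Finset.filter_val, ← Multiset.countP_eq_card_filter]
    rfl
  rw [← hcount, ← List.take_append_drop (k-1) l, List.countP_append] at h
  have h2 : (l.drop (k-1)).countP (fun y => decide (y ≤ x)) = 0 := by
    rw [List.countP_eq_zero]
    intro a ha
    obtain ⟨i, hi, rfl⟩ := List.mem_iff_getElem.1 ha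
    rw [List.getElem_drop]
    have : l[k-1] ≤ l[k-1+i]'(by simp at hi; omega) := by
      rcases Nat.eq_zero_or_pos i with rfl | hpos
      · simp
      · exact List.pairwise_iff_getElem.1 hsort _ _ _ _ (by omega)
    simp only [decide_eq_true_eq, not_le]
    linarith
  have h1 := List.countP_le_length (p := fun y => decide (y ≤ x)) (l := l.take (k-1))
  rw [List.length_take] at h1
  omega

lemma rank_card_aux {m : ℕ} (z : Fin m → ℝ) (k : ℕ) :
    (Finset.univ.filter (fun j =>
      (Finset.univ.filter (fun i => z i ≤ z j)).card ≤ k)).card ≤ k := by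
  set S := Finset.univ.filter (fun j =>
      (Finset.univ.filter (fun i => z i ≤ z j)).card ≤ k) with hS
  rcases S.eq_empty_or_nonempty with h | h
  · simp [h]
  · obtain ⟨j, hj, hmax⟩ := S.exists_max_image z h
    refine le_trans (Finset.card_le_card ?_) (Finset.mem_filter.1 hj).2
    intro i hi
    simpa using hmax i hi

/-- Split conformal prediction coverage guarantee: if `Z 0, …, Z n` are exchangeable
real random variables, `α ∈ (0,1)`, `k = ⌊α (n+1)⌋` with `1 ≤ k ≤ n`, and `τ` is the
`k`-th smallest of the first `n` variables, then `P(Z (n+1) ≥ τ) ≥ 1 - α`. -/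
theorem conformal_coverage {Ω : Type*} [MeasurableSpace Ω] (μ : Measure Ω)
    [IsProbabilityMeasure μ]
    (n : ℕ) (hn : 0 < n) (Z : Fin (n + 1) → Ω → ℝ) (hZ : ∀ i, Measurable (Z i))
    (hexch : ∀ σ : Equiv.Perm (Fin (n + 1)),
      Measure.map (fun ω => fun i => Z (σ i) ω) μ = Measure.map (fun ω => fun i => Z i ω) μ)
    (α : ℝ) (hα : α ∈ Set.Ioo (0 : ℝ) 1)
    (k : ℕ) (hk : (k : ℤ) = ⌊α * (n + 1)⌋) (hk1 : 1 ≤ k) (hkn : k ≤ n) :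
    ENNReal.ofReal (1 - α) ≤
      μ {ω | kthSmallest (fun i : Fin n => Z i.castSucc ω) k ≤ Z (Fin.last n) ω} := by
  classical
  let A : Fin (n+1) → Set (Fin (n+1) → ℝ) := fun j =>
    {z | (Finset.univ.filter (fun i => z i ≤ z j)).card ≤ k}
  have hA : ∀ j, MeasurableSet (A j) := by
    intro j
    have : Measurable (fun z : Fin (n+1) → ℝ =>
        (Finset.univ.filter (fun i => z i ≤ z j)).card) := by
      simp only [Finset.card_filter]
      refine Finset.measurable_sum _ fun i _ => ?_
      exact Measurable.ite (measurableSet_le (measurable_pi_apply i) (measurable_pi_apply j))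
        measurable_const measurable_const
    exact this measurableSet_Iic
  have hZm : Measurable (fun ω => fun i => Z i ω) := measurable_pi_lambda _ hZ
  let B : Fin (n+1) → Set Ω := fun j => (fun ω => fun i => Z i ω) ⁻¹' A j
  have hB : ∀ j, MeasurableSet (B j) := fun j => hZm (hA j)
  have hBeq : ∀ j, μ (B j) = μ (B (Fin.last n)) := by
    intro j
    let σ : Equiv.Perm (Fin (n+1)) := Equiv.swap j (Fin.last n)
    have h := congrArg (fun ν => ν (A (Fin.last n))) (hexch σ)
    rw [Measure.map_apply (measurable_pi_lambda _ fun i => hZ (σ i)) (hA _),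
      Measure.map_apply hZm (hA _)] at h
    rw [← h]
    congr 1
    ext ω
    have hc : (Finset.univ.filter (fun i => Z (σ i) ω ≤ Z j ω)).card
        = (Finset.univ.filter (fun i => Z i ω ≤ Z j ω)).card := by
      simp only [Finset.card_filter]
      exact Equiv.sum_comp σ (fun i => if Z i ω ≤ Z j ω then 1 else 0)
    have hs : σ (Fin.last n) = j := Equiv.swap_apply_right _ _
    simp only [B, A, Set.mem_preimage, Set.mem_ofPred_eq, hs, hc]
  have hsum : ∑ j, μ (B j) ≤ (k : ENNReal) := by
    calc ∑ j, μ (B j) = ∑ j, ∫⁻ ω, (B j).indicator 1 ω ∂μ := by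
          refine Finset.sum_congr rfl fun j _ => ?_
          rw [lintegral_indicator_one (hB j)]
      _ = ∫⁻ ω, ∑ j, (B j).indicator 1 ω ∂μ := by
          rw [lintegral_finsetSum]
          exact fun j _ => measurable_one.indicator (hB j)
      _ ≤ ∫⁻ _, (k : ENNReal) ∂μ := by
          refine lintegral_mono fun ω => ?_
          have := rank_card_aux (fun i => Z i ω) k
          rw [Finset.card_filter] at this
          have h2 : ((∑ j : Fin (n+1), if (Finset.univ.filter
            (fun i => Z i ω ≤ Z j ω)).card ≤ k then 1 else 0 : ℕ) : ENNReal) ≤ k := by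
            exact_mod_cast this
          refine le_trans (le_of_eq ?_) h2
          push_cast
          refine Finset.sum_congr rfl fun j _ => ?_
          simp [Set.indicator_apply, B, A]
      _ = k := by simp
  simp only [hBeq, Finset.sum_const, Finset.card_univ, Fintype.card_fin, nsmul_eq_mul] at hsum
  have hkα : (k : ℝ) ≤ α * (n + 1) := by
    have := Int.floor_le (α * ((n:ℝ) + 1))
    rw [← hk] at this
    exact_mod_cast this
  have hBα : μ (B (Fin.last n)) ≤ ENNReal.ofReal α := by
    have hr : ((n + 1 : ℕ) : ℝ) * μ.real (B (Fin.last n)) ≤ k := by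
      have := ENNReal.toReal_mono (by simp) hsum
      rw [ENNReal.toReal_mul, ENNReal.toReal_natCast, ENNReal.toReal_natCast] at this
      exact this
    rw [ENNReal.le_ofReal_iff_toReal_le (measure_ne_top _ _) hα.1.le]
    change μ.real _ ≤ α
    push_cast at hr
    have hn1 : (0:ℝ) < n + 1 := by positivity
    refine le_of_mul_le_mul_left ?_ hn1
    linarith
  set G := {ω | kthSmallest (fun i : Fin n => Z i.castSucc ω) k ≤ Z (Fin.last n) ω} with hG
  have hcov : (Set.univ : Set Ω) ⊆ G ∪ B (Fin.last n) := by
    intro ω _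
    by_cases h : ω ∈ G
    · exact Or.inl h
    · right
      have h1 : ¬ k ≤ _ := fun h' => h (kth_le_aux (fun i : Fin n => Z i.castSucc ω) k hk1 hkn
        (Z (Fin.last n) ω) h')
      simp only [B, A, Set.mem_preimage, Set.mem_ofPred_eq]
      rw [Finset.card_filter] at h1 ⊢
      rw [Fin.sum_univ_castSucc]
      simp only [le_refl, if_true]
      omega
  have h1 : (1 : ENNReal) ≤ μ G + ENNReal.ofReal α := by
    calc (1 : ENNReal) = μ Set.univ := by simp
      _ ≤ μ (G ∪ B (Fin.last n)) := measure_mono hcov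
      _ ≤ μ G + μ (B (Fin.last n)) := measure_union_le _ _
      _ ≤ _ := by gcongr
  rw [ENNReal.ofReal_sub _ hα.1.le, ENNReal.ofReal_one]
  exact tsub_le_iff_right.2 h1
end

section
/- Let α ∈ (0,1) and let k ≥ 1 be an integer. Let A_1, ..., A_k be mutually independent events on a probability space with P(A_i) ≥ 1 − α for each i. Let F be the cumulative distribution function of the binomial distribution Bin(k, 1−α), i.e., F(x) = Σ_{j=0}^{x} C(k,j)(1−α)^j α^{k−j} for x ∈ {0, ..., k}, and let τ̂(α) = max{x ∈ {0, ..., k} : F(x) ≤ α} (this maximum exists since F(0) = α^k ≤ α). Then P( Σ_{i=1}^{k} 1_{A_i} > τ̂(α) ) ≥ 1 − α. -/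
open MeasureTheory ProbabilityTheory

lemma binom_cdf_step (α : ℝ) (n t : ℕ) :
    (∑ j ∈ Finset.range (t + 1), ((n + 1).choose j : ℝ) * (1 - α) ^ j * α ^ (n + 1 - j))
      = (1 - α) * (∑ j ∈ Finset.range t, (n.choose j : ℝ) * (1 - α) ^ j * α ^ (n - j))
        + α * (∑ j ∈ Finset.range (t + 1), (n.choose j : ℝ) * (1 - α) ^ j * α ^ (n - j)) := by
  rw [Finset.sum_range_succ', Finset.sum_range_succ' _ t, mul_add, Finset.mul_sum, Finset.mul_sum,
    ← add_assoc, ← Finset.sum_add_distrib]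
  congr 1
  · refine Finset.sum_congr rfl fun j _ => ?_
    rw [Nat.choose_succ_succ, Nat.add_sub_add_right]
    push_cast
    rcases Nat.lt_or_ge n (j + 1) with h | h
    · rw [Nat.choose_eq_zero_of_lt h]
      push_cast
      ring
    · obtain ⟨m, rfl⟩ := Nat.exists_eq_add_of_le h
      rw [show j + 1 + m - j = m + 1 by omega, show j + 1 + m - (j + 1) = m by omega]
      ring
  · simp
    ring

lemma count_cdf_le {Ω : Type*} [MeasurableSpace Ω] (μ : Measure Ω)
    [IsProbabilityMeasure μ] (α : ℝ) (hα : α ∈ Set.Ioo (0 : ℝ) 1) (k : ℕ)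
    (A : Fin k → Set Ω) (hAm : ∀ i, MeasurableSet (A i))
    (hindep : iIndepSet A μ)
    (hcov : ∀ i, 1 - α ≤ μ.real (A i)) (s : Finset (Fin k)) :
    ∀ t : ℕ, μ.real {ω | ∑ i ∈ s, (A i).indicator (fun _ => (1 : ℕ)) ω < t} ≤
      ∑ j ∈ Finset.range t, (s.card.choose j : ℝ) * (1 - α) ^ j * α ^ (s.card - j) := by
  have hmeas : ∀ i, Measurable ((A i).indicator (fun _ => (1 : ℕ))) := fun i =>
    measurable_const.indicator (hAm i)
  have hind : iIndepFun (fun i => (A i).indicator (fun _ : Ω => (1 : ℕ))) μ :=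
    hindep.iIndepFun_indicator
  induction s using Finset.induction_on with
  | empty =>
    intro t
    rcases t with _ | t
    · simp
    · rw [Finset.sum_range_succ']
      simp
  | insert a s ha ih =>
    intro t
    rcases t with _ | t
    · simp
    rw [Finset.card_insert_of_notMem ha, binom_cdf_step]
    have h1 := hind.indepFun_finset_sum_of_notMem hmeas ha
    set S : Ω → ℕ := ∑ i ∈ s, (A i).indicator (fun _ => (1 : ℕ)) with hS
    have hSm : Measurable S := by
      rw [hS, Finset.sum_fn]
      exact Finset.measurable_sum _ fun i _ => hmeas i
    have hSe : ∀ ω, ∑ i ∈ s, (A i).indicator (fun _ => (1 : ℕ)) ω = S ω := fun ω => by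
      simp [hS]
    simp only [hSe] at ih
    have hset : ∀ u : ℕ, MeasurableSet {ω | S ω < u} := fun u =>
      measurableSet_lt hSm measurable_const
    have hi : ∀ u : ℕ, μ.real ({ω | S ω < u} ∩ A a) = μ.real {ω | S ω < u} * μ.real (A a) := by
      intro u
      have h2 := h1.measure_inter_preimage_eq_mul (Set.Iio u) {1} (by measurability) (by measurability)
      have e1 : (A a).indicator (fun _ => (1 : ℕ)) ⁻¹' {1} = A a := by
        ext ω
        by_cases h : ω ∈ A a <;> simp [h]
      rw [e1] at h2
      have := congrArg ENNReal.toReal h2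
      rw [ENNReal.toReal_mul] at this
      exact this
    have e : {ω | ∑ i ∈ insert a s, (A i).indicator (fun _ => (1 : ℕ)) ω < t + 1}
        = ({ω | S ω < t} ∩ A a) ∪ ({ω | S ω < t + 1} \ A a) := by
      ext ω
      simp only [Finset.sum_insert ha, hSe, Set.mem_setOf_eq, Set.mem_union, Set.mem_inter_iff,
        Set.mem_diff]
      by_cases h : ω ∈ A a
      · simp [h]
        omega
      · simp [h]
    rw [e, measureReal_union (by
      rw [Set.disjoint_left]
      rintro ω ⟨_, h⟩ ⟨_, h'⟩
      exact h' h) ((hset (t + 1)).diff (hAm a)), hi]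
    have h3 := measureReal_inter_add_diff (μ := μ) (s := {ω | S ω < t + 1}) (hAm a)
    rw [hi (t + 1)] at h3
    have hmono : μ.real {ω | S ω < t} ≤ μ.real {ω | S ω < t + 1} :=
      measureReal_mono fun ω (h : S ω < t) => Nat.lt_succ_of_lt h
    have i1 := mul_le_mul_of_nonneg_left (ih t) (sub_nonneg.2 hα.2.le)
    have i2 := mul_le_mul_of_nonneg_left (ih (t + 1)) hα.1.le
    have i3 := mul_le_mul_of_nonneg_right (hcov a) (sub_nonneg.2 hmono)
    nlinarith

/-- Coverage of majority prediction sets (Theorem 2): if `A 1, …, A k` are mutually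
independent events each with probability at least `1 - α`, `F` is the CDF of the
binomial distribution `Bin(k, 1-α)` and `τ = max {x ∈ {0,…,k} : F x ≤ α}`, then the
probability that more than `τ` of the events occur is at least `1 - α`. -/
theorem majority_coverage {Ω : Type*} [MeasurableSpace Ω] (μ : Measure Ω)
    [IsProbabilityMeasure μ]
    (α : ℝ) (hα : α ∈ Set.Ioo (0 : ℝ) 1) (k : ℕ) (hk : 1 ≤ k)
    (A : Fin k → Set Ω) (hAm : ∀ i, MeasurableSet (A i))
    (hindep : iIndepSet A μ)
    (hcov : ∀ i, ENNReal.ofReal (1 - α) ≤ μ (A i))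
    (F : ℕ → ℝ)
    (hF : ∀ x, F x = ∑ j ∈ Finset.range (x + 1), (k.choose j : ℝ) * (1 - α) ^ j * α ^ (k - j))
    (τ : ℕ) (hτk : τ ≤ k) (hτle : F τ ≤ α) (hτmax : ∀ x ≤ k, F x ≤ α → x ≤ τ) :
    ENNReal.ofReal (1 - α) ≤
      μ {ω | τ < ∑ i, (A i).indicator (fun _ => (1 : ℕ)) ω} := by
  have hm : ∀ i, 1 - α ≤ μ.real (A i) := fun i =>
    (ENNReal.ofReal_le_iff_le_toReal (measure_ne_top _ _)).1 (hcov i)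
  have h := count_cdf_le μ α hα k A hAm hindep hm Finset.univ (τ + 1)
  rw [Finset.card_univ, Fintype.card_fin, ← hF] at h
  rw [ENNReal.ofReal_le_iff_le_toReal (measure_ne_top _ _)]
  have hms : MeasurableSet {ω | ∑ i, (A i).indicator (fun _ => (1 : ℕ)) ω < τ + 1} :=
    measurableSet_lt (Finset.measurable_sum _ fun i _ => measurable_const.indicator (hAm i))
      measurable_const
  have hc := probReal_compl_eq_one_sub (μ := μ) hms
  have e : {ω | ∑ i, (A i).indicator (fun _ => (1 : ℕ)) ω < τ + 1}ᶜ
      = {ω | τ < ∑ i, (A i).indicator (fun _ => (1 : ℕ)) ω} := by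
    ext ω
    simp only [Set.mem_compl_iff, Set.mem_setOf_eq]
    omega
  rw [e] at hc
  change 1 - α ≤ μ.real _
  rw [hc]
  linarith
end

section
/- Let K ≥ 2, let π ∈ ℝ^K, let y be an index in {1, ..., K}, let δ > 0, and let j, j' be indices distinct from y. For an index m ≠ y define h(m) = e^{π_y − δ} / ( e^{π_y − δ} + e^{π_m + δ} + Σ_{i ∉ {y, m}} e^{π_i} ), the softmax score of y after transferring δ from coordinate y to coordinate m. If π_j ≥ π_{j'}, then h(j) ≤ h(j'). In particular, among all recipient coordinates m ≠ y, the resulting score of y is minimized by choosing m ∈ argmax_{m ≠ y} π_m. -/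
/-- The softmax score of coordinate `y` after transferring mass `δ` from coordinate `y`
to the recipient coordinate `m`. -/
noncomputable def recipientScore {K : ℕ} (π : Fin K → ℝ) (y : Fin K) (δ : ℝ) (m : Fin K) : ℝ :=
  Real.exp (π y - δ) /
    (Real.exp (π y - δ) + Real.exp (π m + δ) + ∑ i ∈ Finset.univ \ {y, m}, Real.exp (π i))

theorem recipientScore_aux {K : ℕ} (π : Fin K → ℝ) (y : Fin K)
    (δ : ℝ) (hδ : 0 < δ) (j j' : Fin K) (hj : j ≠ y) (hj' : j' ≠ y)
    (hord : π j' ≤ π j) :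
    recipientScore π y δ j ≤ recipientScore π y δ j' := by
  have key : ∀ m : Fin K, m ≠ y → ∑ i ∈ Finset.univ \ {y, m}, Real.exp (π i)
      = ∑ i, Real.exp (π i) - (Real.exp (π y) + Real.exp (π m)) := by
    intro m hm
    have h := Finset.sum_sdiff (f := fun i => Real.exp (π i))
      (Finset.subset_univ ({y, m} : Finset (Fin K)))
    rw [Finset.sum_pair hm.symm] at h
    linarith
  have hpos : 0 ≤ ∑ i ∈ Finset.univ \ {y, j'}, Real.exp (π i) :=
    Finset.sum_nonneg fun i _ => (Real.exp_pos _).le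
  unfold recipientScore
  apply div_le_div_of_nonneg_left (Real.exp_pos _).le
  · have := Real.exp_pos (π y - δ)
    have := Real.exp_pos (π j' + δ)
    linarith
  · rw [key j hj, key j' hj', Real.exp_add, Real.exp_add]
    have h1 : 1 ≤ Real.exp δ := Real.one_le_exp hδ.le
    have h2 : Real.exp (π j') ≤ Real.exp (π j) := Real.exp_le_exp.mpr hord
    nlinarith [mul_nonneg (sub_nonneg.2 h1) (sub_nonneg.2 h2)]

/-- Recipient optimality (correctness of the greedy lower-bound Algorithm 4): transferring
`δ > 0` from `y` to a recipient coordinate with larger mass yields a smaller softmax score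
of `y`; in particular the score of `y` is minimized by choosing a recipient of maximal
mass. -/
theorem recipient_optimality (K : ℕ) (hK : 2 ≤ K) (π : Fin K → ℝ) (y : Fin K)
    (δ : ℝ) (hδ : 0 < δ) (j j' : Fin K) (hj : j ≠ y) (hj' : j' ≠ y)
    (hord : π j' ≤ π j) :
    recipientScore π y δ j ≤ recipientScore π y δ j' ∧
    ∀ m : Fin K, m ≠ y → (∀ m', m' ≠ y → π m' ≤ π m) →
      ∀ m', m' ≠ y → recipientScore π y δ m ≤ recipientScore π y δ m' := by
  exact ⟨recipientScore_aux π y δ hδ j j' hj hj' hord, fun m hm h m' hm' =>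
    recipientScore_aux π y δ hδ m m' hm hm' (h m' hm')⟩
end

section
/- Let n be a positive integer and 1 ≤ k ≤ n. Let z̲, z̃ : {1, ..., n} → ℝ satisfy z̲_i ≤ z̃_i for all i, let τ̲ be the k-th smallest value of z̲_1, ..., z̲_n, and let τ̃ be the k-th smallest value of z̃_1, ..., z̃_n. Let Y be a finite set and let s̃, s̄ : Y → ℝ satisfy s̃(y) ≤ s̄(y) for all y ∈ Y. If C ⊆ Y is such that s̄(y) < τ̲ for every y ∉ C, then {y ∈ Y : s̃(y) ≥ τ̃} ⊆ C. -/
theorem oi_self_aux (x : ℝ) (xs : List ℝ) (h : (x :: xs).Pairwise (· ≤ ·)) :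
    List.orderedInsert (· ≤ ·) x xs = x :: xs := by
  cases xs with
  | nil => rfl
  | cons y ys =>
    have hxy : x ≤ y := by
      rw [List.pairwise_cons] at h
      exact h.1 y (by simp)
    simp [List.orderedInsert, hxy]

theorem oi_mono_aux (l l' : List ℝ) (h : List.Forall₂ (· ≤ ·) l l') :
    l.Pairwise (· ≤ ·) → l'.Pairwise (· ≤ ·) → ∀ a b : ℝ, a ≤ b →
    List.Forall₂ (· ≤ ·) (List.orderedInsert (· ≤ ·) a l) (List.orderedInsert (· ≤ ·) b l') := by
  induction h with
  | nil => intro _ _ a b hab; simpa using hab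
  | @cons x y xs ys hxy ht ih =>
    intro h1 h2 a b hab
    have ih' := ih (List.pairwise_cons.1 h1).2 (List.pairwise_cons.1 h2).2
    by_cases hax : a ≤ x <;> by_cases hby : b ≤ y <;>
      simp only [List.orderedInsert, hax, hby, if_true, if_false]
    · exact .cons hab (.cons hxy ht)
    · refine .cons (hax.trans hxy) ?_
      rw [← oi_self_aux x xs h1]
      exact ih' x b (hxy.trans (not_le.1 hby).le)
    · refine .cons ((not_le.1 hax).le.trans hab) ?_
      rw [← oi_self_aux y ys h2]
      exact ih' a y (hab.trans hby)
    · exact .cons hxy (ih' a b hab)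

theorem sort_mono_aux (l l' : List ℝ) (h : List.Forall₂ (· ≤ ·) l l') :
    List.Forall₂ (· ≤ ·) (List.insertionSort (· ≤ ·) l) (List.insertionSort (· ≤ ·) l') := by
  induction h with
  | nil => simp
  | cons hxy ht ih =>
    exact oi_mono_aux _ _ ih (List.pairwise_insertionSort _ _)
      (List.pairwise_insertionSort _ _) _ _ hxy

theorem getD_mono_aux (l l' : List ℝ) (h : List.Forall₂ (· ≤ ·) l l') :
    ∀ i : ℕ, l.getD i 0 ≤ l'.getD i 0 := by
  induction h with
  | nil => simp
  | cons hxy ht ih =>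
    intro i
    cases i with
    | zero => simpa using hxy
    | succ i => simpa using ih i

/-- Size reliability (Theorem 3, second half): if the poisoned calibration scores `zt`
are lower bounded by `zl`, the poisoned test scores `st` are upper bounded by `su`, and
every class outside `C` satisfies `su y < τ̲` for the quantile `τ̲` of the lower bounds,
then the poisoned prediction set `{y : st y ≥ τ̃}` is contained in `C`. -/
theorem size_reliability_scores (n : ℕ) (hn : 0 < n) (k : ℕ) (hk1 : 1 ≤ k) (hkn : k ≤ n)
    (zl zt : Fin n → ℝ) (hz : ∀ i, zl i ≤ zt i)
    {Y : Type*} [Fintype Y]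
    (st su : Y → ℝ) (hs : ∀ y, st y ≤ su y)
    (C : Set Y) (hC : ∀ y ∉ C, su y < kthSmallest zl k) :
    {y : Y | kthSmallest zt k ≤ st y} ⊆ C := by
  intro y hy
  by_contra hyC
  have h1 := hC y hyC
  have h2 := hs y
  have h3 : kthSmallest zt k ≤ st y := hy
  have h4 : kthSmallest zl k ≤ kthSmallest zt k := by
    apply getD_mono_aux
    apply sort_mono_aux
    rw [List.forall₂_iff_get]
    refine ⟨by simp, ?_⟩
    intro i hi hi'
    simpa using hz _
  linarith
end

section
/- Let Y be a finite set, let k and τ̂ be natural numbers with τ̂ < k, let r be a natural number, and let C_1, ..., C_k and C̃_1, ..., C̃_k be subsets of Y with |{i : C̃_i ≠ C_i}| ≤ r. Define the majority sets C^M = {y ∈ Y : |{i : y ∈ C_i}| > τ̂} and C̃^M = {y ∈ Y : |{i : y ∈ C̃_i}| > τ̂}. If min_{y ∈ C^M} |{i : y ∈ C_i}| − r > τ̂ (with the convention that the condition holds vacuously if C^M is empty), then C^M ⊆ C̃^M; that is, no class can be removed from the majority prediction set. -/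
/-- Coverage reliability of majority prediction sets (Theorem 4, first half): if an
adversary alters at most `r` of the `k` individual prediction sets and for every class
of the majority set the support minus `r` still exceeds the threshold `τ` (vacuously if
the majority set is empty), then no class can be removed from the majority set. -/
theorem majority_coverage_reliability {Y : Type*} [Fintype Y] [DecidableEq Y]
    (k τ : ℕ) (hτ : τ < k) (r : ℕ)
    (C Ct : Fin k → Finset Y)
    (hdiff : (Finset.univ.filter (fun i => Ct i ≠ C i)).card ≤ r)
    (CM CtM : Finset Y)
    (hCM : CM = Finset.univ.filter
      (fun y => τ < (Finset.univ.filter (fun i => y ∈ C i)).card))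
    (hCtM : CtM = Finset.univ.filter
      (fun y => τ < (Finset.univ.filter (fun i => y ∈ Ct i)).card))
    (hmin : ∀ y ∈ CM, τ < (Finset.univ.filter (fun i => y ∈ C i)).card - r) :
    CM ⊆ CtM := by
  intro y hy
  have h := hmin y hy
  have hsub : (Finset.univ.filter (fun i => y ∈ C i)) ⊆
      (Finset.univ.filter (fun i => y ∈ Ct i)) ∪ (Finset.univ.filter (fun i => Ct i ≠ C i)) := by
    intro i hi
    simp only [Finset.mem_union, Finset.mem_filter, Finset.mem_univ, true_and] at hi ⊢
    by_cases hc : Ct i = C i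
    · left
      rw [hc]
      exact hi
    · right
      exact hc
  have h1 := (Finset.card_le_card hsub).trans (Finset.card_union_le _ _)
  rw [hCtM, Finset.mem_filter]
  exact ⟨Finset.mem_univ _, by omega⟩
end

section
/- Let Y be a finite set, let k and τ̂ be natural numbers with τ̂ < k, let r be a natural number, and let C_1, ..., C_k and C̃_1, ..., C̃_k be subsets of Y with |{i : C̃_i ≠ C_i}| ≤ r. Define the majority sets C^M = {y ∈ Y : |{i : y ∈ C_i}| > τ̂} and C̃^M = {y ∈ Y : |{i : y ∈ C̃_i}| > τ̂}. If max_{y ∉ C^M} |{i : y ∈ C_i}| + r ≤ τ̂ (with the convention that the condition holds vacuously if C^M = Y), then C̃^M ⊆ C^M; that is, no class can be added to the majority prediction set. -/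
/-- Size reliability of majority prediction sets (Theorem 4, second half): if an
adversary alters at most `r` of the `k` individual prediction sets and for every class
outside the majority set the support plus `r` is still at most the threshold `τ`
(vacuously if the majority set is all of `Y`), then no class can be added to the
majority set. -/
theorem majority_size_reliability {Y : Type*} [Fintype Y] [DecidableEq Y]
    (k τ : ℕ) (hτ : τ < k) (r : ℕ)
    (C Ct : Fin k → Finset Y)
    (hdiff : (Finset.univ.filter (fun i => Ct i ≠ C i)).card ≤ r)
    (CM CtM : Finset Y)
    (hCM : CM = Finset.univ.filter
      (fun y => τ < (Finset.univ.filter (fun i => y ∈ C i)).card))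
    (hCtM : CtM = Finset.univ.filter
      (fun y => τ < (Finset.univ.filter (fun i => y ∈ Ct i)).card))
    (hmax : ∀ y : Y, y ∉ CM → (Finset.univ.filter (fun i => y ∈ C i)).card + r ≤ τ) :
    CtM ⊆ CM := by
  intro y hy
  by_contra hn
  have h1 := hmax y hn
  rw [hCtM, Finset.mem_filter] at hy
  have h2 : Finset.univ.filter (fun i => y ∈ Ct i) ⊆
      Finset.univ.filter (fun i => y ∈ C i) ∪ Finset.univ.filter (fun i => Ct i ≠ C i) := by
    intro i hi
    simp only [Finset.mem_union, Finset.mem_filter, Finset.mem_univ, true_and] at hi ⊢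
    by_cases h : Ct i = C i
    · left
      rw [← h]
      exact hi
    · right
      exact h
  have h3 := (Finset.card_le_card h2).trans (Finset.card_union_le _ _)
  have h4 := hy.2
  omega
end
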